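/- Let 0 < α < 1. Then the sequence n ↦ C_n(α) is strictly increasing for n ≥ 3; in particular C_n(α) ≥ C_3(α) = (3/5)·(2α-4)(2α-5)/((2α-2)(2α-3)) for all n ≥ 3. -/

import Mathlib

open Complex Metric Set

/-- `A_n(α) = Γ(n+1-2α)/(n! Γ(2-2α))`. -/
noncomputable def zalcA (α : ℝ) (n : ℕ) : ℝ :=
  Real.Gamma ((n : ℝ) + 1 - 2*α) / ((Nat.factorial n : ℝ) * Real.Gamma (2 - 2*α))

/-- `C_n(α) = 2 A_{2n-1}(α) / A_n(α)²`. -/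
noncomputable def zalcC (α : ℝ) (n : ℕ) : ℝ :=
  2 * zalcA α (2*n - 1) / (zalcA α n)^2

/-!
For `m ≥ 1` the ratio `A_{m+1} / A_m = 1 - 2α / (m + 1)` is positive and increases with `m`.
Passing from `C_n` to `C_{n+1}` multiplies the numerator by the ratios at `m = 2n - 1` and `m = 2n`,
and the denominator by the square of the ratio at `m = n`. The last ratio is at most the first and
less than the second.
-/

section

variable {α : ℝ} {n : ℕ}

theorem zalcA_one (hΓ : Real.Gamma (2 - 2 * α) ≠ 0) : zalcA α 1 = 1 := by
  rw [zalcA, Nat.cast_one, one_add_one_eq_two, Nat.factorial_one, Nat.cast_one, one_mul,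
    div_self hΓ]

theorem zalcA_succ (h : (n : ℝ) + 1 - 2 * α ≠ 0) :
    zalcA α (n + 1) = zalcA α n * (1 - 2 * α / (n + 1)) := by
  have hΓ : Real.Gamma (((n + 1 : ℕ) : ℝ) + 1 - 2 * α) =
      ((n : ℝ) + 1 - 2 * α) * Real.Gamma ((n : ℝ) + 1 - 2 * α) := by
    rw [← Real.Gamma_add_one h, Nat.cast_add_one, add_sub_right_comm]
  rw [zalcA, zalcA, hΓ, Nat.factorial_succ, one_sub_div n.cast_add_one_ne_zero, div_mul_div_comm]
  push_cast
  ring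

theorem zalcA_pos (hα : α < 1) (hn : 1 ≤ n) : 0 < zalcA α n := by
  have hn' : (1 : ℝ) ≤ n := Nat.one_le_cast.2 hn
  have hnum : 0 < Real.Gamma ((n : ℝ) + 1 - 2 * α) := Real.Gamma_pos_of_pos (by linarith)
  have hden : 0 < Real.Gamma (2 - 2 * α) := Real.Gamma_pos_of_pos (by linarith)
  exact div_pos hnum (mul_pos (Nat.cast_pos.2 n.factorial_pos) hden)

theorem zalcC_pos (hα : α < 1) (hn : 1 ≤ n) : 0 < zalcC α n :=
  div_pos (mul_pos two_pos (zalcA_pos hα (by lia))) (pow_pos (zalcA_pos hα hn) 2)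

theorem zalcC_succ (hα : α < 1) (hn : 1 ≤ n) :
    zalcC α (n + 1) = zalcC α n *
      ((1 - 2 * α / (2 * n)) * (1 - 2 * α / (2 * n + 1)) / (1 - 2 * α / (n + 1)) ^ 2) := by
  have hn' : (1 : ℝ) ≤ n := Nat.one_le_cast.2 hn
  have hcast : ((2 * n - 1 : ℕ) : ℝ) + 1 = 2 * n := by
    exact_mod_cast (by lia : 2 * n - 1 + 1 = 2 * n)
  have hodd : zalcA α (2 * n) = zalcA α (2 * n - 1) * (1 - 2 * α / (2 * n)) := by
    have h := zalcA_succ (α := α) (n := 2 * n - 1) (by rw [hcast]; linarith)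
    rwa [hcast, show 2 * n - 1 + 1 = 2 * n by lia] at h
  have heven : zalcA α (2 * n + 1) = zalcA α (2 * n) * (1 - 2 * α / (2 * n + 1)) := by
    have h := zalcA_succ (α := α) (n := 2 * n) (by push_cast; linarith)
    rwa [Nat.cast_mul, Nat.cast_two] at h
  rw [zalcC, zalcC, show 2 * (n + 1) - 1 = 2 * n + 1 by lia, heven, hodd,
    zalcA_succ (n := n) (by linarith), mul_pow, div_mul_div_comm]
  ring

end

theorem sq_one_sub_div_lt_mul {t x : ℝ} (ht : 0 < t) (hx : 1 ≤ x) (htx : t < x + 1) :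
    (1 - t / (x + 1)) ^ 2 < (1 - t / (2 * x)) * (1 - t / (2 * x + 1)) := by
  have hpos : 0 < 1 - t / (x + 1) := sub_pos.2 ((div_lt_one (by linarith)).2 htx)
  have hle : 1 - t / (x + 1) ≤ 1 - t / (2 * x) := by gcongr; linarith
  have hlt : 1 - t / (x + 1) < 1 - t / (2 * x + 1) := by gcongr; linarith
  rw [sq]
  exact mul_lt_mul' hle hlt hpos.le (hpos.trans_le hle)

theorem zalcC_lt_succ {α : ℝ} {n : ℕ} (hα₁ : 0 < α) (hα₂ : α < 1) (hn : 1 ≤ n) :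
    zalcC α n < zalcC α (n + 1) := by
  have hn' : (1 : ℝ) ≤ n := Nat.one_le_cast.2 hn
  have hpos : 0 < 1 - 2 * α / (n + 1) :=
    sub_pos.2 ((div_lt_one (by linarith)).2 (by linarith))
  rw [zalcC_succ hα₂ hn]
  refine lt_mul_of_one_lt_right (zalcC_pos hα₂ hn) ((one_lt_div (pow_pos hpos 2)).2 ?_)
  exact sq_one_sub_div_lt_mul (by linarith) hn' (by linarith)

theorem zalcC_one {α : ℝ} (hα : α < 1) : zalcC α 1 = 2 := by
  rw [zalcC, zalcA_one (Real.Gamma_pos_of_pos (by linarith)).ne']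
  norm_num

theorem zalcC_three {α : ℝ} (hα : α < 1) :
    zalcC α 3 = (3 / 5) * ((2 * α - 4) * (2 * α - 5)) / ((2 * α - 2) * (2 * α - 3)) := by
  have hα' : 1 - α ≠ 0 := by linarith
  have h₃ : 3 - 2 * α ≠ 0 := by linarith
  have hsign : (2 * α - 2) * (2 * α - 3) = (2 - 2 * α) * (3 - 2 * α) := by ring
  have hratio₂ : 1 - 2 * α / (1 + 1) = 1 - α := by ring
  have hratio₃ : 1 - 2 * α / (2 + 1) = (3 - 2 * α) / 3 := by ring
  have htwo : zalcC α 2 = zalcC α 1 * _ := zalcC_succ hα le_rfl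
  rw [zalcC_succ hα one_le_two, htwo, zalcC_one hα, hsign, Nat.cast_one, Nat.cast_two, hratio₂,
    hratio₃]
  field_simp
  ring

theorem stmt_6_general (α : ℝ) (hα₁ : 0 < α) (hα₂ : α < 1) :
    StrictMonoOn (zalcC α) (Ici 1) ∧
    zalcC α 3 = (3 / 5) * ((2 * α - 4) * (2 * α - 5)) / ((2 * α - 2) * (2 * α - 3)) :=
  ⟨strictMonoOn_of_lt_add_one ordConnected_Ici fun _ _ hn _ => zalcC_lt_succ hα₁ hα₂ hn,
    zalcC_three hα₂⟩

theorem stmt_6 (α : ℝ) (hα₁ : 0 < α) (hα₂ : α < 1) :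
    (∀ m n : ℕ, 3 ≤ m → m < n → zalcC α m < zalcC α n) ∧
    (∀ n : ℕ, 3 ≤ n → zalcC α 3 ≤ zalcC α n) ∧
    zalcC α 3 = (3/5) * ((2*α - 4) * (2*α - 5)) / ((2*α - 2) * (2*α - 3)) := by
  have ⟨hmono, hthree⟩ := stmt_6_general α hα₁ hα₂
  have hmono₃ := hmono.mono (Ici_subset_Ici.2 (show 1 ≤ 3 by norm_num))
  exact ⟨fun m n hm hmn => hmono₃ hm (hm.trans hmn.le) hmn,
    fun n hn => hmono₃.monotoneOn self_mem_Ici hn hn, hthree⟩
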